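/- arXiv:0802.2045 — 2 statements merged into one kernel-verified Lean document; each statement's English description precedes it below -/
import Mathlib

section
/- Let q be a prime power, F a finite field with q elements, and let M ⊆ F^q be the set of vectors whose q coordinates are pairwise distinct (injective tuples Fin q → F). For any two distinct points x, y ∈ M, the affine line {y + t•(x − y) : t ∈ F} is contained in M if and only if all coordinates of x − y are equal (i.e. x − y is a nonzero scalar multiple of the all-ones vector (1, 1, …, 1)). -/
theorem exists_add_mul_eq_add_mul {K : Type*} [DivisionRing K] (a b : K) {c d : K}
    (h : c ≠ d) : ∃ t : K, a + t * c = b + t * d := by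
  obtain ⟨t, ht : t * (c - d) = b - a⟩ := mul_right_surjective₀ (sub_ne_zero.mpr h) (b - a)
  rw [mul_sub, sub_eq_sub_iff_add_eq_add] at ht
  exact ⟨t, (add_comm _ _).trans ht⟩

theorem injective_add_of_forall_eq {ι G : Type*} [Add G] [IsRightCancelAdd G] {y d : ι → G}
    (hy : Function.Injective y) (hd : ∀ i j, d i = d j) : Function.Injective (y + d) := by
  intro i j (hij : y i + d i = y j + d j)
  rw [hd i j] at hij
  exact hy (add_right_cancel hij)

theorem apply_eq_of_forall_injective_add_smul {ι K : Type*} [DivisionRing K] {y d : ι → K}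
    (h : ∀ t : K, Function.Injective (y + t • d)) (i j : ι) : d i = d j := by
  by_contra hne
  -- The line `y + t • d` crosses the hyperplane `v i = v j`, not being parallel to it.
  obtain ⟨t, ht⟩ := exists_add_mul_eq_add_mul (y i) (y j) hne
  have hij : i = j := h t ht
  exact hne (congrArg d hij)

theorem line_in_braid_complement_iff_general {ι K : Type*} [DivisionRing K] {y : ι → K}
    (hy : Function.Injective y) (d : ι → K) :
    {z : ι → K | ∃ t : K, z = y + t • d} ⊆ {v : ι → K | Function.Injective v} ↔
      ∀ i j : ι, d i = d j := by
  constructor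
  · intro hline
    exact apply_eq_of_forall_injective_add_smul fun t ↦ hline ⟨t, rfl⟩
  · rintro hd _ ⟨t, rfl⟩
    exact injective_add_of_forall_eq hy fun i j ↦ congrArg (t • ·) (hd i j)

/-- Let `M ⊆ F^q` be the set of vectors with pairwise distinct coordinates
(injective tuples `Fin q → F`, where `q = |F|`). For two distinct points `x, y ∈ M`, the
affine line `{y + t • (x - y) : t ∈ F}` is contained in `M` if and only if all the
coordinates of `x - y` are equal (i.e. `x - y` is a nonzero scalar multiple of the
all-ones vector). -/
theorem line_in_braid_complement_iff
    (q : ℕ) (hq : IsPrimePow q)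
    (F : Type) [Field F] [Fintype F] (hF : Fintype.card F = q)
    (x y : Fin q → F)
    (hx : Function.Injective x) (hy : Function.Injective y) (hxy : x ≠ y) :
    {z : Fin q → F | ∃ t : F, z = y + t • (x - y)} ⊆
        {v : Fin q → F | Function.Injective v} ↔
      ∀ i j : Fin q, (x - y) i = (x - y) j :=
  line_in_braid_complement_iff_general hy (x - y)
end

section
/- Let q be a prime power, F a finite field with q elements, and let M ⊆ F^q be the set of vectors whose q coordinates are pairwise distinct (injective tuples Fin q → F). The number of affine lines of F^q that are entirely contained in M is exactly (q−1)!. -/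
/-!
A line in `F^q` avoiding every hyperplane `x i = x j` is parallel to each of them, so its direction
is proportional to `(1, …, 1)`. Such a line contains exactly one point whose coordinate at a chosen
index vanishes, and the line avoids the hyperplanes exactly when that point does; its other
coordinates are then any injective choice of nonzero elements of `F`.
-/

open Function

section AffineLine

variable (K : Type*) {V : Type*} [Ring K] [AddCommGroup V] [Module K V]

/-- The line through `y` with direction `d`, as a set of points; it degenerates to `{y}` when
`d = 0`. -/
def affineLine (y d : V) : Set V := {z | ∃ t : K, z = y + t • d}

/-- The affine lines contained in `s`, each counted as a set of points rather than as a
parametrization. -/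
def linesIn (s : Set V) : Set (Set V) :=
  {l | (∃ y d : V, d ≠ 0 ∧ l = affineLine K y d) ∧ l ⊆ s}

variable {K}

lemma mem_affineLine_self (y d : V) : y ∈ affineLine K y d := ⟨0, by simp⟩

lemma affineLine_smul {c : K} (hc : IsUnit c) (y d : V) :
    affineLine K y (c • d) = affineLine K y d := by
  obtain ⟨u, rfl⟩ := hc
  ext z
  constructor
  · rintro ⟨t, rfl⟩
    exact ⟨t * u, by rw [mul_smul]⟩
  · rintro ⟨t, rfl⟩
    exact ⟨t * ↑u⁻¹, by rw [smul_smul, Units.inv_mul_cancel_right]⟩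

lemma affineLine_add_smul (y d : V) (s : K) :
    affineLine K (y + s • d) d = affineLine K y d := by
  ext z
  constructor
  · rintro ⟨t, rfl⟩
    exact ⟨s + t, by rw [add_smul, add_assoc]⟩
  · rintro ⟨t, rfl⟩
    exact ⟨t - s, by rw [sub_smul]; abel⟩

end AffineLine

section PointedInjection

variable {ι α : Type*}

/-- Injections `ι → α` sending `i₀` to `a` correspond, by restriction, to embeddings of the
complement of `i₀` into the complement of `a`. -/
def pointedInjectionEquiv [DecidableEq ι] (i₀ : ι) (a : α) :
    {f : ι → α // Injective f ∧ f i₀ = a} ≃ ({i // i ≠ i₀} ↪ {x // x ≠ a}) where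
  toFun f :=
    { toFun i := ⟨f.1 i, fun h => i.2 (f.2.1 (h.trans f.2.2.symm))⟩
      inj' _ _ h := Subtype.ext (f.2.1 (congrArg Subtype.val h)) }
  invFun e :=
    { val i := if h : i = i₀ then a else e ⟨i, h⟩
      property := by
        refine ⟨fun i j hij => ?_, dif_pos rfl⟩
        by_cases hi : i = i₀ <;> by_cases hj : j = i₀
        · exact hi.trans hj.symm
        · exact absurd (by simpa [hi, hj] using hij.symm) (e ⟨j, hj⟩).2
        · exact absurd (by simpa [hi, hj] using hij) (e ⟨i, hi⟩).2
        · simpa [hi, hj, Subtype.val_inj] using hij }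
  left_inv f := by
    ext i
    by_cases hi : i = i₀
    · simp [hi, f.2.2]
    · exact dif_neg hi
  right_inv e := by
    ext i
    simp [i.2]

lemma ncard_injective_and_apply_eq [Fintype ι] [Fintype α] (i₀ : ι) (a : α) :
    {f : ι → α | Injective f ∧ f i₀ = a}.ncard =
      (Fintype.card α - 1).descFactorial (Fintype.card ι - 1) := by
  classical
  calc {f : ι → α | Injective f ∧ f i₀ = a}.ncard
      = Nat.card ({i // i ≠ i₀} ↪ {x // x ≠ a}) := Nat.card_congr (pointedInjectionEquiv i₀ a)
    _ = (Fintype.card α - 1).descFactorial (Fintype.card ι - 1) := by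
      simp [Nat.card_eq_fintype_card, Fintype.card_embedding_eq, Fintype.card_subtype_compl]

end PointedInjection

/-- The complement of the affine braid arrangement, i.e. of the union of the hyperplanes
`x i = x j` with `i ≠ j`. -/
def braidComplement (ι K : Type*) : Set (ι → K) := {v | Injective v}

section Ring

variable {ι K : Type*} [Ring K] {y y' : ι → K}

lemma affineLine_one_subset_braidComplement_iff :
    affineLine K y 1 ⊆ braidComplement ι K ↔ Injective y := by
  refine ⟨fun h => h (mem_affineLine_self y 1), ?_⟩
  rintro hy _ ⟨t, rfl⟩ i j hij
  exact hy (by simpa using hij)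

lemma eq_of_affineLine_one_eq {i : ι} (hi : y i = y' i)
    (h : affineLine K y 1 = affineLine K y' 1) : y = y' := by
  obtain ⟨t, rfl⟩ : y ∈ affineLine K y' 1 := h ▸ mem_affineLine_self y 1
  have ht : t = 0 := by simpa using hi
  simp [ht]

lemma exists_affineLine_one_eq (y : ι → K) (i : ι) :
    ∃ y' : ι → K, y' i = 0 ∧ affineLine K y' 1 = affineLine K y 1 :=
  ⟨y + (-y i) • 1, by simp, affineLine_add_smul y 1 (-y i)⟩

end Ring

section DivisionRing

variable {ι K : Type*} [DivisionRing K]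

lemma direction_apply_eq_of_affineLine_subset_braidComplement
    {y d : ι → K} (h : affineLine K y d ⊆ braidComplement ι K) (i j : ι) : d i = d j := by
  by_contra hne
  have hd : d i - d j ≠ 0 := sub_ne_zero.mpr hne
  let t := (y j - y i) * (d i - d j)⁻¹
  have ht : t * (d i - d j) = y j - y i := inv_mul_cancel_right₀ hd _
  have hmeet : (y + t • d) i = (y + t • d) j := by
    rw [mul_sub, sub_eq_sub_iff_add_eq_add] at ht
    simpa [add_comm] using ht
  exact hne (congrArg d (h ⟨t, rfl⟩ hmeet))

lemma linesIn_braidComplement_eq_image (i₀ : ι) :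
    linesIn K (braidComplement ι K) =
      (affineLine K · 1) '' {y : ι → K | Injective y ∧ y i₀ = 0} := by
  ext l
  constructor
  · rintro ⟨⟨y, d, hd, rfl⟩, hsub⟩
    have hconst : d = d i₀ • 1 := funext fun i => by
      simpa using direction_apply_eq_of_affineLine_subset_braidComplement hsub i i₀
    have hd₀ : d i₀ ≠ 0 := fun h => hd (by rw [hconst, h, zero_smul])
    obtain ⟨y', hy', hline⟩ := exists_affineLine_one_eq y i₀
    have heq : affineLine K y d = affineLine K y' 1 := by
      rw [hconst, affineLine_smul hd₀.isUnit, hline]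
    rw [heq] at hsub ⊢
    exact ⟨y', ⟨affineLine_one_subset_braidComplement_iff.mp hsub, hy'⟩, rfl⟩
  · rintro ⟨y, ⟨hy, -⟩, rfl⟩
    have : Nonempty ι := ⟨i₀⟩
    exact ⟨⟨y, 1, one_ne_zero, rfl⟩, affineLine_one_subset_braidComplement_iff.mpr hy⟩

end DivisionRing

theorem card_lines_in_braid_complement_general (ι K : Type*) [Fintype ι] [Nonempty ι]
    [DivisionRing K] [Fintype K] :
    (linesIn K (braidComplement ι K)).ncard =
      (Fintype.card K - 1).descFactorial (Fintype.card ι - 1) := by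
  obtain ⟨i₀⟩ := ‹Nonempty ι›
  have hinj : Set.InjOn (affineLine K · 1) {y : ι → K | Injective y ∧ y i₀ = 0} :=
    fun y hy y' hy' h => eq_of_affineLine_one_eq (hy.2.trans hy'.2.symm) h
  rw [linesIn_braidComplement_eq_image i₀, hinj.ncard_image, ncard_injective_and_apply_eq]

/-- Let `M ⊆ F^q` be the set of vectors with pairwise distinct coordinates
(injective tuples `Fin q → F`, where `q = |F|`). The number of affine lines of `F^q`
entirely contained in `M` is exactly `(q-1)!`. -/
theorem card_lines_in_braid_complement
    (q : ℕ) (hq : IsPrimePow q)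
    (F : Type) [Field F] [Fintype F] (hF : Fintype.card F = q) :
    Set.ncard {l : Set (Fin q → F) |
        (∃ (y d : Fin q → F), d ≠ 0 ∧ l = {z : Fin q → F | ∃ t : F, z = y + t • d}) ∧
          l ⊆ {v : Fin q → F | Function.Injective v}} = (q - 1).factorial := by
  have : Nonempty (Fin q) := ⟨0, hq.pos⟩
  have hcard := card_lines_in_braid_complement_general (Fin q) F
  rwa [hF, Fintype.card_fin, Nat.descFactorial_self] at hcard
end
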